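/- Let 𝒫 be an admissible set of abstract patterns in ℝ^d. Then the following are equivalent: (i) 𝒫 is linearly repetitive, i.e. there is a constant c_LR > 0 such that every Q ∈ 𝒫 with r_out(Q) ≥ 1 is a subpattern of every P ∈ 𝒫 with r_in(P) ≥ c_LR · r_out(Q); (ii) there is a constant c_{LR,b} > 0 such that for every r ≥ 1, every P ∈ 𝒫(r) satisfies P ⊂ Q for every Q ∈ 𝒫(c_{LR,b} · r). -/

import Mathlib

open Metric Set Filter MeasureTheory Topology

noncomputable section

/-- Points of `ℝ^d`. -/
abbrev Pt (d : ℕ) := EuclideanSpace ℝ (Fin d)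

variable (d : ℕ)

/-- A tile: a subset of `ℝ^d` homeomorphic to the closed unit ball. -/
def IsTile (m : Set (Pt d)) : Prop :=
  Nonempty (m ≃ₜ (Metric.closedBall (0 : Pt d) 1))

/-- A pattern: a finite nonempty collection of tiles whose interiors are pairwise disjoint. -/
def IsPattern (M : Set (Set (Pt d))) : Prop :=
  M.Finite ∧ M.Nonempty ∧ (∀ m ∈ M, IsTile d m) ∧
    M.Pairwise fun m m' => interior m ∩ interior m' = ∅

/-- A tiling of `ℝ^d`: a collection of tiles with pairwise disjoint interiors covering `ℝ^d`. -/
def IsTiling (T : Set (Set (Pt d))) : Prop :=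
  (∀ m ∈ T, IsTile d m) ∧
    (T.Pairwise fun m m' => interior m ∩ interior m' = ∅) ∧ ⋃₀ T = Set.univ

/-- Translation of a pattern by `t`. -/
def patTrans (t : Pt d) (M : Set (Set (Pt d))) : Set (Set (Pt d)) :=
  (fun m => (fun x => x + t) '' m) '' M

/-- Support (underlying set) of a pattern. -/
def supp (M : Set (Set (Pt d))) : Set (Pt d) := ⋃₀ M

/-- Inner radius: the largest `r` such that some closed ball of radius `r` fits inside `s(M)`. -/
def rIn (M : Set (Set (Pt d))) : ℝ :=
  sSup {r : ℝ | ∃ x : Pt d, Metric.closedBall x r ⊆ supp d M}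

/-- Outer radius: the smallest `r` such that some closed ball of radius `r` contains `s(M)`. -/
def rOut (M : Set (Set (Pt d))) : ℝ :=
  sInf {r : ℝ | ∃ x : Pt d, supp d M ⊆ Metric.closedBall x r}

/-- The pattern class of `P` is a subpattern of (the class of) `Q`:
some translate of `P` is contained in `Q`. -/
def SubpatternClass (P Q : Set (Set (Pt d))) : Prop :=
  ∃ t : Pt d, patTrans d t P ⊆ Q

/-- A set of abstract patterns is modelled as a translation-closed set `Ps` of concrete
patterns (the union of the pattern classes).  `Admissible` encodes conditions
(i)–(iii) of Definition 2.1. -/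
structure Admissible (Ps : Set (Set (Set (Pt d)))) : Prop where
  pattern : ∀ P ∈ Ps, IsPattern d P
  transClosed : ∀ (t : Pt d), ∀ P ∈ Ps, patTrans d t P ∈ Ps
  subClosed : ∀ P ∈ Ps, ∀ Q : Set (Set (Pt d)), IsPattern d Q → Q ⊆ P → Q ∈ Ps
  tileBounds : ∃ rmin rmax : ℝ, 0 < rmin ∧ rmin ≤ rmax ∧
    ∀ m : Set (Pt d), ({m} : Set (Set (Pt d))) ∈ Ps →
      rmin ≤ rIn d {m} ∧ rIn d {m} ≤ rOut d {m} ∧ rOut d {m} ≤ rmax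
  extend : ∀ P ∈ Ps, (0 : Pt d) ∈ supp d P → ∀ r : ℝ, 0 < r →
    ∃ Q ∈ Ps, P ⊆ Q ∧ Metric.closedBall (0 : Pt d) r ⊆ supp d Q

/-- Linear repetitivity of a (translation-closed) set of patterns. -/
def LinearlyRepetitive (Ps : Set (Set (Set (Pt d)))) : Prop :=
  ∃ c : ℝ, 0 < c ∧ ∀ P ∈ Ps, 1 ≤ rOut d P →
    ∀ Q ∈ Ps, c * rOut d P ≤ rIn d Q → SubpatternClass d P Q

/-- The box determined by corner functions `a b : Fin d → ℝ`. -/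
def boxSet (a b : Fin d → ℝ) : Set (Pt d) := {x | ∀ j, x j ∈ Set.Icc (a j) (b j)}

/-- `B` is a box. -/
def IsBox (B : Set (Pt d)) : Prop :=
  ∃ a b : Fin d → ℝ, (∀ j, a j < b j) ∧ B = boxSet d a b

/-- `B` is an `r`-box: all side lengths lie in `[r, 2r]`. -/
def IsRBox (r : ℝ) (B : Set (Pt d)) : Prop :=
  ∃ a b : Fin d → ℝ, (∀ j, a j < b j) ∧ B = boxSet d a b ∧
    ∀ j, r ≤ b j - a j ∧ b j - a j ≤ 2 * r

/-- Width of a box: the minimum of its side lengths. -/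
def widthOf (B : Set (Pt d)) : ℝ :=
  ⨅ j : Fin d, (sSup ((fun x : Pt d => x j) '' B) - sInf ((fun x : Pt d => x j) '' B))

/-- Volume of a subset of `ℝ^d`. -/
def volOf (B : Set (Pt d)) : ℝ := (volume B).toReal

/-- Restriction `M ∩ B` of a pattern or tiling `M` to `B`. -/
def patRestrict (M : Set (Set (Pt d))) (B : Set (Pt d)) : Set (Set (Pt d)) :=
  {s | ∃ m ∈ M, (m ∩ interior B).Nonempty ∧ s = m ∩ B}

/-- The set `Ps_B` of box-patterns derived from `Ps` (concrete representatives). -/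
def BoxPatterns (Ps : Set (Set (Set (Pt d)))) : Set (Set (Set (Pt d))) :=
  {Q | ∃ P ∈ Ps, ∃ B : Set (Pt d), IsBox d B ∧ B ⊆ supp d P ∧ Q = patRestrict d P B}

/-- The set `Ps(r)` of `r`-patterns derived from `Ps`. -/
def RPatterns (Ps : Set (Set (Set (Pt d)))) (r : ℝ) : Set (Set (Set (Pt d))) :=
  {Q | ∃ P ∈ Ps, ∃ B : Set (Pt d), IsRBox d r B ∧ B ⊆ supp d P ∧ Q = patRestrict d P B}

/-- Width of a box-pattern. -/
def patWidth (M : Set (Set (Pt d))) : ℝ := widthOf d (supp d M)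

/-- Volume of a box-pattern. -/
def patVol (M : Set (Set (Pt d))) : ℝ := volOf d (supp d M)

/-- A subadditive function on `Ps_B`, with constants `dF, rF` and error function `cF`.
`F` is defined on concrete patterns and is translation-invariant (i.e. well defined on
pattern classes). -/
structure SubadditiveOn (Ps : Set (Set (Set (Pt d)))) (F : Set (Set (Pt d)) → ℝ)
    (dF rF : ℝ) (cF : ℝ → ℝ) : Prop where
  invariant : ∀ (t : Pt d), ∀ M ∈ BoxPatterns d Ps, F (patTrans d t M) = F M
  dF_nonneg : 0 ≤ dF
  rF_nonneg : 0 ≤ rF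
  cF_anti : ∀ r s : ℝ, rF ≤ r → r ≤ s → cF s ≤ cF r
  cF_lim : Tendsto cF atTop (nhds 0)
  subadd : ∀ M ∈ BoxPatterns d Ps, ∀ (n : ℕ) (Bj : Fin n → Set (Pt d)),
    (∀ j, IsBox d (Bj j)) →
    (∀ i j, i ≠ j → interior (Bj i) ∩ interior (Bj j) = ∅) →
    (⋃ j, Bj j) = supp d M →
    (∀ j, rF ≤ widthOf d (Bj j)) →
    F M ≤ (∑ j, F (patRestrict d M (Bj j))) +
      ∑ j, cF (widthOf d (Bj j)) * volOf d (Bj j)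
  bound : ∀ M ∈ BoxPatterns d Ps, |F M| ≤ dF * patVol d M

/-- The upper mean `F⁺(r)`. -/
def Fplus (Ps : Set (Set (Set (Pt d)))) (F : Set (Set (Pt d)) → ℝ) (r : ℝ) : ℝ :=
  sSup ((fun P => F P / patVol d P) '' RPatterns d Ps r)

/-- The lower mean `F⁻(r)`. -/
def Fminus (Ps : Set (Set (Set (Pt d)))) (F : Set (Set (Pt d)) → ℝ) (r : ℝ) : ℝ :=
  sInf ((fun P => F P / patVol d P) '' RPatterns d Ps r)


/-- The relation `P ⊂ Q` on box-patterns: some translate of `P` is the restriction of `Q`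
to a sub-box of the box underlying `Q`. -/
def BoxSubpattern (P Q : Set (Set (Pt d))) : Prop :=
  ∃ (t : Pt d) (B : Set (Pt d)), IsBox d B ∧ B ⊆ supp d Q ∧
    patTrans d t P = patRestrict d Q B

/-!
Write `T` for a bound on the tile diameters. For (i) ⇒ (ii), a pattern on an `r`-box `B` extends to
a patch of outer radius at most `d * r + T`, while the tiles of `Q` lying inside a large box `C`
form a patch of large inner radius; linear repetitivity embeds the first patch into the second, and
one restricts back to `B`. For (ii) ⇒ (i), surround `P` by a box containing it in its interior. A
tile of `P` is then found in `Q` as `q ∩ B` with `q ∩ B ⊆ interior B`, and since `q` is connected it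
cannot leave `B`, so `q ∩ B = q`.

That restricting a patch and restricting a larger pattern to `B` give the same result relies on
`q ⊆ closure (interior q)` for tiles `q`, which follows from a weak form of invariance of domain: an
injective continuous image of a ball in a space of the same dimension has nonempty interior. To
prove the latter, take a smooth approximate left inverse `g` of the embedding `f`, with countable
zero set by Sard's theorem. If the image had empty interior, a small translate of it would miss the
zeros of `g`, contradicting Brouwer's theorem for `y ↦ y - g (f y - v)`. Brouwer's theorem comes
from the absence of a smooth retraction `f` of a ball onto its sphere: the volume of the image of
the ball under `x ↦ x + t (f x - x)` is a polynomial in `t`, constant for small `t`, but vanishing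
at `t = 1`.
-/

section InterpolationOfDeterminants

open Polynomial in
lemma exists_polynomial_eval_eq_det_one_add_smul {R M : Type*} [CommRing R] [Nontrivial R]
    [AddCommGroup M] [Module R M] [Module.Free R M] [Module.Finite R M] (A : M →ₗ[R] M) :
    ∃ p : R[X], p.natDegree ≤ Module.finrank R M ∧ ∀ t, p.eval t = LinearMap.det (1 + t • A) := by
  classical
  let b := Module.Free.chooseBasis R M
  let N := LinearMap.toMatrix b b A
  refine ⟨((X : R[X]) • N.map C + (1 : Matrix _ _ R).map C).det, ?_, fun t => ?_⟩
  · simpa only [Module.finrank_eq_card_chooseBasisIndex] using natDegree_det_X_add_C_le N 1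
  · rw [← LinearMap.det_toMatrix b, ← coe_evalRingHom, RingHom.map_det]
    congr 1
    ext i j
    simp only [RingHom.mapMatrix_apply, Matrix.map_apply, Matrix.add_apply, Matrix.smul_apply,
      smul_eq_mul, map_add, coe_evalRingHom, eval_mul, eval_X, eval_C, map_smul,
      LinearMap.toMatrix_one, add_comm, N]

lemma exists_weights_eval_eq_sum {K : Type*} [Field K] {n : ℕ} {s : Finset K} (hs : n < s.card)
    (x : K) : ∃ w : K → K, ∀ p : Polynomial K, p.natDegree ≤ n →
      p.eval x = ∑ v ∈ s, w v * p.eval v := by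
  classical
  refine ⟨fun v => (Lagrange.basis s id v).eval x, fun p hp => ?_⟩
  have hdeg : p.degree < s.card :=
    Polynomial.degree_le_natDegree.trans_lt (by exact_mod_cast hp.trans_lt hs)
  conv_lhs => rw [Lagrange.eq_interpolate (v := id) (injOn_id _) hdeg]
  simp [Lagrange.interpolate_apply, Polynomial.eval_finsetSum, mul_comm]

end InterpolationOfDeterminants

section LipschitzPerturbation

lemma inter_frontier_nonempty_of_isPreconnected {X : Type*} [TopologicalSpace X] {s t : Set X}
    (ht : IsPreconnected t) (hts : (t ∩ s).Nonempty) (hts' : ¬ t ⊆ s) :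
    (t ∩ frontier s).Nonempty := by
  by_contra! hempty
  have hint : ∀ x ∈ t, x ∈ closure s → x ∈ interior s := fun x hxt hx => by
    by_contra hxi
    exact hempty.subset ⟨hxt, hx, hxi⟩
  obtain ⟨x, hxt, hxs⟩ := hts
  refine hts' ((ht.subset_of_closure_inter_subset isOpen_interior
    ⟨x, hxt, hint x hxt (subset_closure hxs)⟩ ?_).trans interior_subset)
  exact fun y hy => hint y hy.2 (closure_mono interior_subset hy.1)

lemma lipschitzWith_indicator_of_eq_zero_on_frontier {E F : Type*} [NormedAddCommGroup E]
    [NormedSpace ℝ E] [NormedAddCommGroup F] {s : Set E} {g : E → F} {K : NNReal}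
    (hs : IsClosed s) (hg : LipschitzOnWith K g s) (hg0 : ∀ x ∈ frontier s, g x = 0) :
    LipschitzWith K (s.indicator g) := by
  have norm_le : ∀ x ∈ s, ∀ y ∉ s, ‖g x‖ ≤ K * dist x y := by
    intro x hx y hy
    obtain ⟨z, hz, hzs⟩ := inter_frontier_nonempty_of_isPreconnected
      (convex_segment (𝕜 := ℝ) x y).isPreconnected ⟨x, left_mem_segment ℝ x y, hx⟩
      fun h => hy (h (right_mem_segment ℝ x y))
    calc ‖g x‖ = dist (g x) (g z) := by rw [hg0 z hzs, dist_zero_right]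
      _ ≤ K * dist x z := hg.dist_le_mul x hx z (hs.frontier_subset hzs)
      _ ≤ K * dist x y := by
        rw [← dist_add_dist_of_mem_segment hz]
        gcongr
        exact le_add_of_nonneg_right dist_nonneg
  refine LipschitzWith.of_dist_le_mul fun x y => ?_
  by_cases hx : x ∈ s <;> by_cases hy : y ∈ s
  · rw [indicator_of_mem hx, indicator_of_mem hy]
    exact hg.dist_le_mul x hx y hy
  · rw [indicator_of_mem hx, indicator_of_notMem hy, dist_zero_right]
    exact norm_le x hx y hy
  · rw [indicator_of_notMem hx, indicator_of_mem hy, dist_zero_left, dist_comm]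
    exact norm_le y hy x hx
  · rw [indicator_of_notMem hx, indicator_of_notMem hy, dist_self]
    positivity

lemma bijective_add_of_lipschitzWith {E : Type*} [NormedAddCommGroup E] [NormedSpace ℝ E]
    [CompleteSpace E] {g : E → E} {K : NNReal} (hg : LipschitzWith K g) (hK : K < 1) :
    Function.Bijective fun x => x + g x := by
  have happrox : ApproximatesLinearOn (fun x => x + g x)
      (ContinuousLinearEquiv.refl ℝ E : E →L[ℝ] E) univ K := fun x _ y _ => by
    simpa [add_sub_add_comm] using hg.norm_sub_le x y
  have hc : Subsingleton E ∨
      K < ‖((ContinuousLinearEquiv.refl ℝ E).symm : E →L[ℝ] E)‖₊⁻¹ := by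
    rcases subsingleton_or_nontrivial E with h | h
    · exact Or.inl h
    · exact Or.inr (by simpa using hK)
  exact ⟨injOn_univ.1 (happrox.injOn hc), happrox.surjective hc⟩

lemma bijOn_add_of_lipschitzOnWith {E : Type*} [NormedAddCommGroup E] [NormedSpace ℝ E]
    [CompleteSpace E] {s : Set E} {g : E → E} {K : NNReal} (hs : IsClosed s)
    (hg : LipschitzOnWith K g s) (hK : K < 1) (hg0 : ∀ x ∈ frontier s, g x = 0) :
    BijOn (fun x => x + g x) s s := by
  have hbij := bijective_add_of_lipschitzWith
    (lipschitzWith_indicator_of_eq_zero_on_frontier hs hg hg0) hK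
  have hcompl : (fun x => x + s.indicator g x) '' sᶜ = sᶜ :=
    (image_congr (g := id) fun x hx => by simp [indicator_of_notMem hx]).trans (image_id _)
  have himage : (fun x => x + s.indicator g x) '' s = s := by
    rwa [image_compl_eq hbij, compl_inj_iff] at hcompl
  exact (himage ▸ hbij.injective.injOn.bijOn_image).congr fun x hx => by
    simp only [indicator_of_mem hx]

end LipschitzPerturbation

section NoRetraction

variable {E : Type*} [NormedAddCommGroup E] [NormedSpace ℝ E]

lemma eventually_det_one_add_smul_pos {X : Type*} [TopologicalSpace X] {s : Set X}
    (hs : IsCompact s) {A : X → E →L[ℝ] E} (hA : Continuous A) :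
    ∀ᶠ t in 𝓝 (0 : ℝ), ∀ x ∈ s, 0 < (1 + t • A x).det := by
  refine hs.eventually_forall_of_forall_eventually fun x _ => ?_
  have hcont : Continuous fun z : ℝ × X => (1 + z.1 • A z.2).det :=
    ContinuousLinearMap.continuous_det.comp (by fun_prop)
  exact hcont.continuousAt.eventually_const_lt (by simp [ContinuousLinearMap.det])

variable [FiniteDimensional ℝ E] [MeasurableSpace E] [BorelSpace E] {s : Set E} {g : E → E}

lemma eventually_setIntegral_det_one_add_smul_fderiv (μ : Measure E) [μ.IsAddHaarMeasure]
    (hs : IsCompact s) (hconv : Convex ℝ s) (hg : ContDiff ℝ 1 g)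
    (hg0 : ∀ x ∈ frontier s, g x = 0) :
    ∀ᶠ t in 𝓝 (0 : ℝ), ∫ x in s, (1 + t • fderiv ℝ g x).det ∂μ = μ.real s := by
  obtain ⟨K, hK⟩ := hg.contDiffOn.exists_lipschitzOnWith one_ne_zero hconv hs
  have hsmall : ∀ᶠ t in 𝓝 (0 : ℝ), ‖t‖₊ * K < 1 :=
    (show Continuous fun t : ℝ => ‖t‖₊ * K by fun_prop).continuousAt.eventually_lt_const (by simp)
  filter_upwards [hsmall, eventually_det_one_add_smul_pos hs (hg.continuous_fderiv one_ne_zero)]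
    with t ht hpos
  have hlip : LipschitzOnWith (‖t‖₊ * K) (fun x => t • g x) s :=
    (lipschitzWith_smul t).comp_lipschitzOnWith hK
  have hbij : BijOn (fun x => x + t • g x) s s :=
    bijOn_add_of_lipschitzOnWith hs.isClosed hlip ht fun x hx => by simp only [hg0 x hx, smul_zero]
  have hderiv : ∀ x ∈ s, HasFDerivWithinAt (fun x => x + t • g x) (1 + t • fderiv ℝ g x) s x :=
    fun x _ => ((hasFDerivAt_id x).add
      ((hg.differentiable one_ne_zero x).hasFDerivAt.const_smul t)).hasFDerivWithinAt
  calc ∫ x in s, (1 + t • fderiv ℝ g x).det ∂μ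
      = ∫ x in s, |(1 + t • fderiv ℝ g x).det| • (1 : ℝ) ∂μ :=
        setIntegral_congr_fun hs.measurableSet fun x hx => by
          simp only [abs_of_pos (hpos x hx), smul_eq_mul, mul_one]
    _ = ∫ _ in (fun x => x + t • g x) '' s, (1 : ℝ) ∂μ :=
        (integral_image_eq_integral_abs_det_fderiv_smul μ hs.measurableSet hderiv hbij.injOn
          fun _ => (1 : ℝ)).symm
    _ = μ.real s := by simp [hbij.image_eq]

-- Both sides are polynomials in `t`, so it is enough that they agree near `0`.
lemma setIntegral_det_one_add_smul_fderiv (μ : Measure E) [μ.IsAddHaarMeasure]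
    (hs : IsCompact s) (hconv : Convex ℝ s) (hg : ContDiff ℝ 1 g)
    (hg0 : ∀ x ∈ frontier s, g x = 0) (t : ℝ) :
    ∫ x in s, (1 + t • fderiv ℝ g x).det ∂μ = μ.real s := by
  obtain ⟨S, hS, hcard⟩ := (infinite_of_mem_nhds 0
    (eventually_setIntegral_det_one_add_smul_fderiv μ hs hconv hg hg0)).exists_subset_card_eq
      (Module.finrank ℝ E + 1)
  obtain ⟨w, hw⟩ := exists_weights_eval_eq_sum (n := Module.finrank ℝ E) (s := S) (by lia) t
  have hdet : ∀ x, (1 + t • fderiv ℝ g x).det = ∑ v ∈ S, w v * (1 + v • fderiv ℝ g x).det := by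
    intro x
    obtain ⟨p, hp, hpdet⟩ := exists_polynomial_eval_eq_det_one_add_smul
      (fderiv ℝ g x : E →ₗ[ℝ] E)
    have := hw p hp
    simp only [hpdet] at this
    exact this
  have hweights : ∑ v ∈ S, w v = 1 := by simpa using (hw 1 (by simp)).symm
  have hint : ∀ v : ℝ, IntegrableOn (fun x => (1 + v • fderiv ℝ g x).det) s μ := fun v =>
    (ContinuousLinearMap.continuous_det.comp (by
      have := hg.continuous_fderiv one_ne_zero
      fun_prop)).continuousOn.integrableOn_compact hs
  calc ∫ x in s, (1 + t • fderiv ℝ g x).det ∂μ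
      = ∑ v ∈ S, w v * ∫ x in s, (1 + v • fderiv ℝ g x).det ∂μ := by
        simp only [hdet, ← integral_const_mul]
        exact integral_finsetSum _ fun v _ => (hint v).const_mul _
    _ = ∑ v ∈ S, w v * μ.real s := Finset.sum_congr rfl fun v hv => by rw [hS hv]
    _ = μ.real s := by rw [← Finset.sum_mul, hweights, one_mul]

end NoRetraction

section Brouwer

variable {E : Type*} [NormedAddCommGroup E] [InnerProductSpace ℝ E] [FiniteDimensional ℝ E]

lemma det_eq_zero_of_norm_eq_const {f : E → E} {f' : E →L[ℝ] E} {x : E} {R : ℝ} (hR : R ≠ 0)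
    (hf : HasFDerivAt f f' x) (hnorm : ∀ y, ‖f y‖ = R) : f'.det = 0 := by
  by_contra hdet
  obtain ⟨u, hu⟩ := (f'.toContinuousLinearEquivOfDetNeZero hdet).surjective (f x)
  replace hu : f' u = f x := hu
  have hsq : HasFDerivAt (fun _ => R ^ 2) (2 • (innerSL ℝ (f x)).comp f') x := by
    simpa only [hnorm] using hf.norm_sq
  have := congrArg (fun L : E →L[ℝ] ℝ => L u) (hsq.unique (hasFDerivAt_const _ _))
  simp [hu, hnorm, hR] at this

theorem not_exists_contDiff_retraction_sphere {R : ℝ} (hR : 0 < R) :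
    ¬ ∃ f : E → E, ContDiff ℝ 1 f ∧ (∀ x, ‖f x‖ = R) ∧ ∀ x ∈ sphere 0 R, f x = x := by
  rintro ⟨f, hf, hnorm, hfix⟩
  borelize E
  have hvol := setIntegral_det_one_add_smul_fderiv (g := fun x => f x - x) volume
    (isCompact_closedBall 0 R) (convex_closedBall 0 R) (by fun_prop)
    (fun x hx => sub_eq_zero.2 (hfix x (frontier_closedBall_subset_sphere hx))) 1
  have hdet : ∀ x, (1 + (1 : ℝ) • fderiv ℝ (fun x => f x - x) x).det = 0 := fun x => by
    have hfx := hf.differentiable one_ne_zero x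
    refine det_eq_zero_of_norm_eq_const hR.ne' ?_ hnorm (x := x)
    convert hfx.hasFDerivAt using 1
    rw [fderiv_fun_sub hfx differentiableAt_fun_id, fderiv_fun_id, one_smul]
    exact add_sub_cancel _ _
  simp only [hdet, integral_zero] at hvol
  exact (ENNReal.toReal_pos (measure_closedBall_pos volume 0 hR).ne'
    measure_closedBall_lt_top.ne).ne hvol

lemma exists_eq_zero_of_eq_id_outside_ball {R : ℝ} (hR : 0 < R) {k : E → E} (hk : Continuous k)
    (hid : ∀ x, R ≤ ‖x‖ → k x = x) : ∃ x, k x = 0 := by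
  by_contra! hne
  have hnhds : {x : E | R < ‖x‖} ∈ 𝓝ˢ {x : E | 2 * R ≤ ‖x‖} :=
    (isOpen_lt continuous_const continuous_norm).mem_nhdsSet.2 fun x (hx : 2 * R ≤ ‖x‖) =>
      show R < ‖x‖ by linarith
  obtain ⟨g, hg, hgk, hgid, -⟩ := hk.exists_contDiff_approx_and_eqOn 1 (ε := fun x => ‖k x‖)
    hk.norm (fun x => norm_pos_iff.2 (hne x)) (isClosed_le continuous_const continuous_norm) hnhds
    (contDiffOn_id.congr fun x (hx : R < ‖x‖) => hid x hx.le)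
  have hg0 : ∀ x, g x ≠ 0 := fun x hx => by
    simpa only [hx, dist_zero_left, lt_self_iff_false] using hgk x
  refine not_exists_contDiff_retraction_sphere (R := 2 * R) (by positivity)
    ⟨fun x => (2 * R / ‖g x‖) • g x, ?_, fun x => ?_, fun x hx => ?_⟩
  · exact (contDiff_const.div (hg.norm ℝ hg0) fun x => norm_ne_zero_iff.2 (hg0 x)).smul hg
  · rw [norm_smul, norm_div, norm_norm, div_mul_cancel₀ _ (norm_ne_zero_iff.2 (hg0 x)),
      Real.norm_of_nonneg (by positivity)]
  · rw [mem_sphere_zero_iff_norm] at hx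
    have hgx : g x = x := (hgid hx.ge).trans (hid x (by linarith))
    change (2 * R / ‖g x‖) • g x = x
    rw [hgx, hx, div_self (by positivity), one_smul]

theorem exists_fixedPoint_of_mapsTo_closedBall {f : E → E}
    (hf : ContinuousOn f (closedBall 0 1)) (hmaps : MapsTo f (closedBall 0 1) (closedBall 0 1)) :
    ∃ x ∈ closedBall 0 1, f x = x := by
  obtain ⟨F, hF⟩ := ContinuousMap.exists_extension
    isClosed_closedBall.isClosedEmbedding_subtypeVal
    (⟨_, hf.mapsToRestrict hmaps⟩ : C(closedBall (0 : E) 1, closedBall (0 : E) 1))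
  have hFf : ∀ x : closedBall (0 : E) 1, (F x : E) = f x := fun x =>
    congrArg Subtype.val (DFunLike.congr_fun hF x)
  let cutoff : E → ℝ := fun x => max 0 (min 1 (2 - ‖x‖))
  obtain ⟨x, hx⟩ := exists_eq_zero_of_eq_id_outside_ball two_pos
    (k := fun x => x - cutoff x • (F x : E)) (by fun_prop) fun x hx => by
      have : cutoff x = 0 := max_eq_left (min_le_of_right_le (by linarith))
      rw [this, zero_smul, sub_zero]
  rw [sub_eq_zero] at hx
  have hx1 : ‖x‖ ≤ 1 := by
    have hcut : ‖cutoff x‖ ≤ 1 := by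
      rw [Real.norm_of_nonneg (le_max_left _ _)]
      exact max_le zero_le_one (min_le_left _ _)
    rw [hx, norm_smul]
    exact mul_le_one₀ hcut (norm_nonneg _) (mem_closedBall_zero_iff.1 (F x).2)
  have hcut : cutoff x = 1 := by
    simp only [cutoff]
    rw [min_eq_left (by linarith), max_eq_right zero_le_one]
  have hxB := mem_closedBall_zero_iff.2 hx1
  exact ⟨x, hxB, by rw [← hFf ⟨x, hxB⟩]; simpa only [hcut, one_smul] using hx.symm⟩

end Brouwer

section CountableFibres

lemma countable_of_forall_eventually_ne {X Y : Type*} [TopologicalSpace X]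
    [SecondCountableTopology X] {g : X → Y} {c : Y}
    (h : ∀ x, g x = c → ∀ᶠ w in 𝓝[≠] x, g w ≠ c) : (g ⁻¹' {c}).Countable := by
  have : DiscreteTopology (g ⁻¹' {c}) := by
    refine discreteTopology_subtype_iff.2 fun x hx => ?_
    rw [← disjoint_iff, disjoint_principal_right]
    exact h x hx
  exact TopologicalSpace.separableSpace_iff_countable.1 inferInstance

lemma dense_forall_add_notMem {E : Type*} [NormedAddCommGroup E] [CompleteSpace E] {X Z : Set E}
    (hX : IsClosed X) (hXint : interior X = ∅) (hZ : Z.Countable) :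
    Dense {v | ∀ z ∈ Z, v + z ∉ X} := by
  have hdense := dense_biInter_of_isOpen (f := fun z => (Homeomorph.addRight z) ⁻¹' Xᶜ)
    (fun z _ => hX.isOpen_compl.preimage (Homeomorph.addRight z).continuous) hZ fun z _ =>
      (interior_eq_empty_iff_dense_compl.1 hXint).preimage (Homeomorph.addRight z).isOpenMap
  exact hdense.mono fun v hv z hz => mem_iInter₂.1 hv z hz

variable {E : Type*} [NormedAddCommGroup E] [NormedSpace ℝ E] [FiniteDimensional ℝ E]

lemma dense_countable_fibre {g : E → E} (hg : ContDiff ℝ 1 g) :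
    Dense {c | (g ⁻¹' {c}).Countable} := by
  borelize E
  have hderiv : ∀ x, HasFDerivAt g (fderiv ℝ g x) x := fun x =>
    (hg.differentiable one_ne_zero x).hasFDerivAt
  have hsard : Measure.addHaar (g '' {x | (fderiv ℝ g x).det = 0}) = 0 :=
    addHaar_image_eq_zero_of_det_fderivWithin_eq_zero _ (fun x _ => (hderiv x).hasFDerivWithinAt)
      fun _ hx => hx
  refine (Measure.dense_of_ae (compl_mem_ae_iff.2 hsard)).mono fun c hc => ?_
  refine countable_of_forall_eventually_ne fun x hx => ?_
  have hdet : (fderiv ℝ g x).det ≠ 0 := fun h => hc ⟨x, h, hx⟩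
  exact (hderiv x).eventually_ne
    ⟨_, ((fderiv ℝ g x).toContinuousLinearEquivOfDetNeZero hdet).antilipschitz⟩

end CountableFibres

section InteriorOfEmbeddedBalls

variable {E : Type*} [NormedAddCommGroup E] [InnerProductSpace ℝ E] [FiniteDimensional ℝ E]
  {f : E → E}

lemma exists_contDiff_approx_leftInverse {K : Set E} (hK : IsCompact K) (hf : ContinuousOn f K)
    (hinj : InjOn f K) {ε : ℝ} (hε : 0 < ε) :
    ∃ g : E → E, ContDiff ℝ 1 g ∧ (∀ y ∈ K, dist (g (f y)) y < ε) ∧ (g ⁻¹' {0}).Countable := by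
  have := isCompact_iff_compactSpace.1 hK
  obtain ⟨G, hG⟩ := ContinuousMap.exists_extension (Y := E)
    (hf.domRestrict.isClosedEmbedding (injOn_iff_injective.1 hinj))
    ⟨Subtype.val, continuous_subtype_val⟩
  obtain ⟨g, hg, hgG, -⟩ := G.continuous.exists_contDiff_approx 1 (ε := fun _ => ε / 2)
    continuous_const fun _ => half_pos hε
  obtain ⟨c, hc, hcε⟩ := (dense_countable_fibre hg).exists_mem_open isOpen_ball
    ⟨0, mem_ball_self (half_pos hε)⟩
  refine ⟨fun x => g x - c, hg.sub contDiff_const, fun y hy => ?_, ?_⟩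
  · have hGy : G (f y) = y := DFunLike.congr_fun hG ⟨y, hy⟩
    calc dist (g (f y) - c) y ≤ dist (g (f y) - c) (g (f y)) + dist (g (f y)) (G (f y)) := by
          rw [hGy]; exact dist_triangle _ _ _
      _ < ε / 2 + ε / 2 := by
          refine add_lt_add ?_ (hgG (f y))
          rwa [dist_self_sub_left, ← dist_zero_right]
      _ = ε := add_halves ε
  · exact Countable.mono (fun x hx => sub_eq_zero.1 hx) hc

theorem interior_image_closedBall_nonempty (hf : ContinuousOn f (closedBall 0 1))
    (hinj : InjOn f (closedBall 0 1)) : (interior (f '' closedBall 0 1)).Nonempty := by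
  by_contra! hempty
  have hball : IsCompact (closedBall (0 : E) 1) := isCompact_closedBall 0 1
  have hX : IsCompact (f '' closedBall 0 1) := hball.image_of_continuousOn hf
  obtain ⟨g, hg, hgf, hgc⟩ := exists_contDiff_approx_leftInverse hball hf hinj one_half_pos
  have hnear : ∀ᶠ v in 𝓝 (0 : E), ∀ x ∈ f '' closedBall 0 1, dist (g (x - v)) (g x) < 1 / 2 := by
    refine hX.eventually_forall_of_forall_eventually fun x _ => ?_
    have hcont : Continuous fun p : E × E => dist (g (p.2 - p.1)) (g p.2) := by
      have := hg.continuous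
      fun_prop
    exact hcont.continuousAt.eventually_lt_const (by simp)
  obtain ⟨v, hv, hvnear⟩ := (dense_forall_add_notMem hX.isClosed hempty hgc).inter_nhds_nonempty
    hnear
  have hcont : ContinuousOn (fun y => y - g (f y - v)) (closedBall 0 1) :=
    continuousOn_id.sub (hg.continuous.comp_continuousOn (hf.sub continuousOn_const))
  obtain ⟨y, hy, hfix⟩ := exists_fixedPoint_of_mapsTo_closedBall hcont fun y hy => by
    rw [mem_closedBall_zero_iff, ← dist_eq_norm, dist_comm]
    calc dist (g (f y - v)) y ≤ dist (g (f y - v)) (g (f y)) + dist (g (f y)) y :=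
          dist_triangle _ _ _
      _ ≤ 1 / 2 + 1 / 2 := add_le_add (hvnear _ (mem_image_of_mem f hy)).le (hgf y hy).le
      _ = 1 := add_halves 1
  refine hv (f y - v) (sub_eq_self.1 hfix) ?_
  rw [add_sub_cancel]
  exact mem_image_of_mem f hy

theorem interior_image_nonempty {s : Set E} (hf : ContinuousOn f s) (hinj : InjOn f s)
    (hs : (interior s).Nonempty) : (interior (f '' s)).Nonempty := by
  obtain ⟨x, hx⟩ := hs
  obtain ⟨r, hr, hrs⟩ := nhds_basis_closedBall.mem_iff.1 (mem_interior_iff_mem_nhds.1 hx)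
  have hmaps : MapsTo (fun y => x + r • y) (closedBall 0 1) s := fun y hy => hrs <| by
    rw [mem_closedBall_zero_iff] at hy
    rw [mem_closedBall, dist_self_add_left, norm_smul, Real.norm_of_nonneg hr.le]
    exact mul_le_of_le_one_right hr.le hy
  have hinj' : Function.Injective fun y : E => x + r • y :=
    (add_right_injective x).comp (smul_right_injective E hr.ne')
  refine (interior_image_closedBall_nonempty (f := f ∘ fun y => x + r • y)
    (hf.comp (by fun_prop) hmaps) (hinj.comp hinj'.injOn hmaps)).mono (interior_mono ?_)
  rw [image_comp]
  exact image_mono hmaps.image_subset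

theorem image_subset_closure_interior_image {K : Set E} (hf : ContinuousOn f K)
    (hinj : InjOn f K) (hK : K ⊆ closure (interior K)) : f '' K ⊆ closure (interior (f '' K)) := by
  rintro _ ⟨x, hx, rfl⟩
  refine mem_closure_iff_nhds.2 fun U hU => ?_
  obtain ⟨W, hW, hxW, hWU⟩ := mem_nhdsWithin.1 (hf x hx hU)
  have hsK : W ∩ interior K ⊆ K := inter_subset_right.trans interior_subset
  have hs : (interior (W ∩ interior K)).Nonempty := by
    rw [(hW.inter isOpen_interior).interior_eq]
    exact mem_closure_iff.1 (hK hx) W hW hxW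
  obtain ⟨z, hz⟩ := interior_image_nonempty (hf.mono hsK) (hinj.mono hsK) hs
  obtain ⟨w, hw, rfl⟩ := interior_subset hz
  exact ⟨f w, hWU ⟨hw.1, hsK hw⟩, interior_mono (image_mono hsK) hz⟩

end InteriorOfEmbeddedBalls

section Boxes

lemma norm_le_card_mul_of_forall_norm_apply_le {ι : Type*} [Fintype ι] {x : EuclideanSpace ℝ ι}
    {s : ℝ} (h : ∀ i, ‖x i‖ ≤ s) : ‖x‖ ≤ Fintype.card ι * s := by
  classical
  calc ‖x‖ = ‖∑ i, x i • EuclideanSpace.basisFun ι ℝ i‖ := by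
        conv_lhs => rw [← (EuclideanSpace.basisFun ι ℝ).sum_repr x]
        simp only [EuclideanSpace.basisFun_repr]
    _ ≤ ∑ i, ‖x i • EuclideanSpace.basisFun ι ℝ i‖ := norm_sum_le _ _
    _ = ∑ i, ‖x i‖ := by
        simp only [norm_smul, (EuclideanSpace.basisFun ι ℝ).norm_eq_one, mul_one]
    _ ≤ Fintype.card ι * s := by
        simpa only [nsmul_eq_mul, Finset.card_univ] using
          Finset.sum_le_card_nsmul Finset.univ _ s fun i _ => h i

variable {d} {a b : Fin d → ℝ} {x : Pt d} {s r : ℝ} {B : Set (Pt d)}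

lemma boxSet_eq_preimage_pi (a b : Fin d → ℝ) :
    boxSet d a b = PiLp.homeomorph 2 (fun _ : Fin d => ℝ) ⁻¹' univ.pi fun j => Icc (a j) (b j) :=
  Set.ext fun _ => mem_univ_pi.symm

lemma boxSet_subset_closedBall (ha : ∀ j, x j - s ≤ a j) (hb : ∀ j, b j ≤ x j + s) :
    boxSet d a b ⊆ closedBall x (d * s) := by
  intro y hy
  rw [mem_closedBall_iff_norm]
  refine (norm_le_card_mul_of_forall_norm_apply_le fun j => ?_).trans_eq (by rw [Fintype.card_fin])
  rw [PiLp.sub_apply, Real.norm_eq_abs, abs_sub_le_iff]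
  have := hy j
  constructor <;> linarith [this.1, this.2, ha j, hb j]

lemma closedBall_subset_boxSet (ha : ∀ j, a j ≤ x j - s) (hb : ∀ j, x j + s ≤ b j) :
    closedBall x s ⊆ boxSet d a b := by
  intro y hy j
  have := (PiLp.norm_apply_le (y - x) j).trans (mem_closedBall_iff_norm.1 hy)
  rw [PiLp.sub_apply, Real.norm_eq_abs, abs_sub_le_iff] at this
  constructor <;> linarith [ha j, hb j]

lemma image_add_right_boxSet (t : Pt d) (a b : Fin d → ℝ) :
    (fun x => x + t) '' boxSet d a b = boxSet d (fun j => a j + t j) (fun j => b j + t j) := by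
  ext x
  simp [boxSet, image_add_right, ← sub_eq_add_neg, le_sub_iff_add_le]

lemma IsBox.image_add_right (hB : IsBox d B) (t : Pt d) : IsBox d ((fun x => x + t) '' B) := by
  obtain ⟨a, b, hab, rfl⟩ := hB
  exact ⟨_, _, fun j => add_lt_add_left (hab j) (t j), image_add_right_boxSet t a b⟩

lemma IsBox.closure_interior (hB : IsBox d B) : closure (interior B) = B := by
  obtain ⟨a, b, hab, rfl⟩ := hB
  rw [boxSet_eq_preimage_pi, ← Homeomorph.preimage_interior, ← Homeomorph.preimage_closure,
    interior_pi_set finite_univ, closure_pi_set]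
  simp only [closure_interior_Icc (hab _).ne]

lemma IsRBox.isBox (hB : IsRBox d r B) : IsBox d B := by
  obtain ⟨a, b, hab, rfl, -⟩ := hB
  exact ⟨a, b, hab, rfl⟩

lemma IsRBox.exists_center (hB : IsRBox d r B) :
    ∃ x, B ⊆ closedBall x (d * r) ∧ closedBall x (r / 2) ⊆ B := by
  obtain ⟨a, b, -, rfl, hab⟩ := hB
  refine ⟨WithLp.toLp 2 fun j => (a j + b j) / 2,
    boxSet_subset_closedBall (fun j => ?_) fun j => ?_,
    closedBall_subset_boxSet (fun j => ?_) fun j => ?_⟩ <;>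
  dsimp only <;> linarith [hab j]

lemma exists_isRBox_between_balls (x : Pt d) (hs : 0 < s) :
    ∃ B, IsRBox d (2 * s) B ∧ B ⊆ closedBall x (d * s) ∧ ball x s ⊆ interior B := by
  refine ⟨boxSet d (fun j => x j - s) fun j => x j + s,
    ⟨_, _, fun j => by linarith, rfl, fun j => by constructor <;> linarith⟩,
    boxSet_subset_closedBall (fun _ => le_rfl) fun _ => le_rfl,
    interior_maximal (ball_subset_closedBall.trans ?_) isOpen_ball⟩
  exact closedBall_subset_boxSet (fun _ => le_rfl) fun _ => le_rfl

end Boxes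

section Tiles

variable {d} {m : Set (Pt d)}

lemma IsTile.exists_image_eq (hm : IsTile d m) :
    ∃ f : Pt d → Pt d, ContinuousOn f (closedBall 0 1) ∧ InjOn f (closedBall 0 1) ∧
      f '' closedBall 0 1 = m := by
  obtain ⟨e⟩ := hm
  let ψ : closedBall (0 : Pt d) 1 → Pt d := Subtype.val ∘ e.symm
  have hf : (closedBall 0 1).domRestrict (Function.extend Subtype.val ψ 0) = ψ :=
    Function.extend_comp Subtype.val_injective ψ 0
  refine ⟨Function.extend Subtype.val ψ 0, ?_, ?_, ?_⟩
  · rw [continuousOn_iff_continuous_domRestrict, hf]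
    exact continuous_subtype_val.comp e.symm.continuous
  · rw [injOn_iff_injective, hf]
    exact Subtype.val_injective.comp e.symm.injective
  · rw [← range_domRestrict, hf, e.symm.surjective.range_comp, Subtype.range_val]

lemma IsTile.isCompact (hm : IsTile d m) : IsCompact m := by
  obtain ⟨f, hf, -, rfl⟩ := hm.exists_image_eq
  exact (isCompact_closedBall 0 1).image_of_continuousOn hf

lemma IsTile.isPreconnected (hm : IsTile d m) : IsPreconnected m := by
  obtain ⟨f, hf, -, rfl⟩ := hm.exists_image_eq
  exact (convex_closedBall 0 1).isPreconnected.image f hf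

lemma IsTile.nonempty (hm : IsTile d m) : m.Nonempty := by
  obtain ⟨f, -, -, rfl⟩ := hm.exists_image_eq
  exact (nonempty_closedBall.2 zero_le_one).image f

lemma IsTile.subset_closure_interior (hm : IsTile d m) : m ⊆ closure (interior m) := by
  obtain ⟨f, hf, hinj, rfl⟩ := hm.exists_image_eq
  refine image_subset_closure_interior_image hf hinj ?_
  rw [interior_closedBall 0 one_ne_zero, closure_ball 0 one_ne_zero]

end Tiles

section Patterns

lemma exists_mem_inter_interior_nonempty {X : Type*} [TopologicalSpace X] {M : Set (Set X)}
    (hM : M.Finite) (hclosed : ∀ m ∈ M, IsClosed m) {U : Set X} (hU : IsOpen U)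
    (hne : U.Nonempty) (hUM : U ⊆ ⋃₀ M) : ∃ m ∈ M, (U ∩ interior m).Nonempty := by
  induction M, hM using Set.Finite.induction_on generalizing U with
  | empty => exact absurd hUM (by simpa using hne.ne_empty)
  | @insert m M _ _ ih =>
    rw [sUnion_insert] at hUM
    by_cases hUm : U ⊆ m
    · exact ⟨m, mem_insert m M, by rwa [inter_eq_left.2 (interior_maximal hUm hU)]⟩
    · obtain ⟨m', hm', hm'U⟩ := ih (fun m' hm' => hclosed m' (mem_insert_of_mem m hm'))
        (hU.sdiff (hclosed m (mem_insert m M))) (sdiff_nonempty.2 hUm) (sdiff_subset_iff.2 hUM)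
      exact ⟨m', mem_insert_of_mem m hm', hm'U.mono (inter_subset_inter_left _ sdiff_subset)⟩

variable {d} {M N : Set (Set (Pt d))} {B B' : Set (Pt d)}

lemma IsPattern.finite (hM : IsPattern d M) : M.Finite := hM.1

lemma IsPattern.nonempty (hM : IsPattern d M) : M.Nonempty := hM.2.1

lemma IsPattern.isTile (hM : IsPattern d M) {m : Set (Pt d)} (hm : m ∈ M) : IsTile d m :=
  hM.2.2.1 m hm

lemma IsPattern.of_subset (hN : IsPattern d N) (hMN : M ⊆ N) (hM : M.Nonempty) : IsPattern d M :=
  ⟨hN.1.subset hMN, hM, fun m hm => hN.2.2.1 m (hMN hm), hN.2.2.2.mono hMN⟩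

lemma IsPattern.isCompact_supp (hM : IsPattern d M) : IsCompact (supp d M) :=
  hM.finite.isCompact_sUnion fun _ hm => (hM.isTile hm).isCompact

lemma IsPattern.supp_nonempty (hM : IsPattern d M) : (supp d M).Nonempty := by
  obtain ⟨m, hm⟩ := hM.nonempty
  exact (hM.isTile hm).nonempty.mono (subset_sUnion_of_mem hm)

lemma supp_patTrans (t : Pt d) (M : Set (Set (Pt d))) :
    supp d (patTrans d t M) = (fun x => x + t) '' supp d M := by
  simp only [supp, patTrans, sUnion_image, image_sUnion]

lemma patTrans_neg_patTrans (t : Pt d) (M : Set (Set (Pt d))) :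
    patTrans d t (patTrans d (-t) M) = M := by
  simp only [patTrans, image_image, neg_add_cancel_right, image_id']

lemma patTrans_patRestrict (t : Pt d) (M : Set (Set (Pt d))) (B : Set (Pt d)) :
    patTrans d t (patRestrict d M B) = patRestrict d (patTrans d t M) ((fun x => x + t) '' B) := by
  have hinj : Function.Injective fun x : Pt d => x + t := add_left_injective t
  have hint : interior ((fun x => x + t) '' B) = (fun x => x + t) '' interior B :=
    ((Homeomorph.addRight t).image_interior B).symm
  ext s
  simp only [patTrans, patRestrict, hint, mem_image, mem_ofPred_eq, exists_exists_and_eq_and,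
    ← image_inter hinj, image_nonempty]
  constructor
  · rintro ⟨_, ⟨m, hm, hne, rfl⟩, rfl⟩
    exact ⟨m, hm, hne, rfl⟩
  · rintro ⟨m, hm, hne, rfl⟩
    exact ⟨_, ⟨m, hm, hne, rfl⟩, rfl⟩

lemma patRestrict_patRestrict (M : Set (Set (Pt d))) (h : B' ⊆ B) :
    patRestrict d (patRestrict d M B) B' = patRestrict d M B' := by
  have hinter : ∀ m : Set (Pt d), m ∩ B ∩ B' = m ∩ B' := fun m => by
    rw [inter_assoc, inter_eq_right.2 h]
  ext s
  constructor
  · rintro ⟨_, ⟨m, hm, -, rfl⟩, hne, rfl⟩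
    exact ⟨m, hm, hne.mono (inter_subset_inter_left _ inter_subset_left), hinter m⟩
  · rintro ⟨m, hm, hne, rfl⟩
    refine ⟨m ∩ B, ⟨m, hm, hne.mono (inter_subset_inter_right _ (interior_mono h)), rfl⟩, ?_,
      (hinter m).symm⟩
    rwa [inter_assoc, inter_eq_right.2 (interior_subset.trans h)]

lemma supp_patRestrict (hM : IsPattern d M) (hB : IsBox d B) (hBM : B ⊆ supp d M) :
    supp d (patRestrict d M B) = B := by
  refine Subset.antisymm (sUnion_subset ?_) fun x hx => ?_
  · rintro _ ⟨m, -, -, rfl⟩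
    exact inter_subset_right
  · let N : Set (Set (Pt d)) := {m ∈ M | (m ∩ interior B).Nonempty}
    have hN : IsClosed (⋃₀ N) := ((hM.finite.subset (sep_subset _ _)).isCompact_sUnion
      fun m hm => (hM.isTile hm.1).isCompact).isClosed
    have hBN : interior B ⊆ ⋃₀ N := fun y hy => by
      obtain ⟨m, hm, hym⟩ := hBM (interior_subset hy)
      exact ⟨m, ⟨hm, y, hym, hy⟩, hym⟩
    obtain ⟨m, ⟨hm, hne⟩, hxm⟩ := closure_minimal hBN hN (hB.closure_interior.ge hx)
    exact ⟨m ∩ B, ⟨m, hm, hne, rfl⟩, hxm, hx⟩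

lemma patRestrict_eq_of_subset (hN : IsPattern d N) (hMN : M ⊆ N) (hB : B ⊆ supp d M) :
    patRestrict d M B = patRestrict d N B := by
  refine Subset.antisymm (fun _ ⟨m, hm, hs⟩ => ⟨m, hMN hm, hs⟩) ?_
  rintro _ ⟨q, hq, hqB, rfl⟩
  refine ⟨q, ?_, hqB, rfl⟩
  obtain ⟨x, hxq, hxB⟩ := hqB
  have hU : (interior B ∩ interior q).Nonempty :=
    mem_closure_iff.1 ((hN.isTile hq).subset_closure_interior hxq) _ isOpen_interior hxB
  obtain ⟨m, hm, y, ⟨-, hyq⟩, hym⟩ := exists_mem_inter_interior_nonempty (hN.finite.subset hMN)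
    (fun m hm => (hN.isTile (hMN hm)).isCompact.isClosed)
    (isOpen_interior.inter isOpen_interior) hU
    (inter_subset_left.trans (interior_subset.trans hB))
  have hqm : q = m := hN.2.2.2.eq hq (hMN hm) fun h => h.subset ⟨hyq, hym⟩
  exact hqm ▸ hm

lemma mem_of_mem_patRestrict_of_subset_interior (hM : ∀ m ∈ M, IsPreconnected m)
    (hB : closure (interior B) ⊆ B) {p : Set (Pt d)} (hp : p ∈ patRestrict d M B)
    (hpB : p ⊆ interior B) : p ∈ M := by
  obtain ⟨m, hm, hne, rfl⟩ := hp
  have hmB : m ⊆ interior B := (hM m hm).subset_of_closure_inter_subset isOpen_interior hne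
    fun x hx => hpB ⟨hx.2, hB hx.1⟩
  rwa [inter_eq_left.2 (hmB.trans interior_subset)]

end Patterns

section Radii

lemma le_of_closedBall_subset_closedBall {E : Type*} [NormedAddCommGroup E] [NormedSpace ℝ E]
    [Nontrivial E] {x y : E} {r s : ℝ} (hs : 0 ≤ s) (h : closedBall x r ⊆ closedBall y s) :
    r ≤ s := by
  rcases lt_or_ge r 0 with hr | hr
  · exact hr.le.trans hs
  · have := diam_mono h isBounded_closedBall
    rw [diam_closedBall_eq x hr, diam_closedBall_eq y hs] at this
    linarith

variable {d} {P : Set (Set (Pt d))} {x y : Pt d} {r s : ℝ}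

lemma exists_closedBall_of_rOut_lt (hP : IsPattern d P) (h : rOut d P < s) :
    ∃ x, supp d P ⊆ closedBall x s := by
  obtain ⟨R, hR⟩ := hP.isCompact_supp.isBounded.subset_closedBall 0
  have hne : {r : ℝ | ∃ x, supp d P ⊆ closedBall x r}.Nonempty := ⟨R, 0, hR⟩
  obtain ⟨r, ⟨x, hx⟩, hr⟩ := exists_lt_of_csInf_lt hne h
  exact ⟨x, hx.trans (closedBall_subset_closedBall hr.le)⟩

lemma dist_le_two_mul_rOut (hP : IsPattern d P) (hx : x ∈ supp d P) (hy : y ∈ supp d P) :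
    dist x y ≤ 2 * rOut d P := by
  rw [← div_le_iff₀' two_pos]
  refine le_of_forall_gt_imp_ge_of_dense fun s hs => ?_
  obtain ⟨z, hz⟩ := exists_closedBall_of_rOut_lt hP hs
  rw [div_le_iff₀' two_pos, two_mul]
  exact (dist_triangle_right x y z).trans (add_le_add (hz hx) (hz hy))

lemma rOut_le (hP : IsPattern d P) (h : supp d P ⊆ closedBall x s) : rOut d P ≤ s := by
  obtain ⟨z, hz⟩ := hP.supp_nonempty
  exact csInf_le ⟨0, fun r ⟨y, hy⟩ => dist_nonneg.trans (hy hz)⟩ ⟨x, h⟩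

lemma exists_closedBall_of_lt_rIn (h : s < rIn d P) : ∃ x, closedBall x s ⊆ supp d P := by
  have hne : {r : ℝ | ∃ x, closedBall x r ⊆ supp d P}.Nonempty :=
    ⟨-1, 0, (closedBall_eq_empty.2 neg_one_lt_zero).trans_subset (empty_subset _)⟩
  obtain ⟨r, ⟨x, hx⟩, hr⟩ := exists_lt_of_lt_csSup hne h
  exact ⟨x, (closedBall_subset_closedBall hr.le).trans hx⟩

lemma le_rOut [NeZero d] (hP : IsPattern d P) (h : closedBall x r ⊆ supp d P) : r ≤ rOut d P := by
  obtain ⟨R, hR⟩ := hP.isCompact_supp.isBounded.subset_closedBall 0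
  obtain ⟨z, hz⟩ := hP.supp_nonempty
  exact le_csInf ⟨R, 0, hR⟩ fun s ⟨y, hy⟩ =>
    le_of_closedBall_subset_closedBall (dist_nonneg.trans (hy hz)) (h.trans hy)

lemma le_rIn [NeZero d] (hP : IsPattern d P) (h : closedBall x r ⊆ supp d P) : r ≤ rIn d P := by
  obtain ⟨R, hR⟩ := hP.isCompact_supp.isBounded.subset_closedBall 0
  obtain ⟨z, hz⟩ := hP.supp_nonempty
  exact le_csSup ⟨R, fun s ⟨y, hy⟩ =>
    le_of_closedBall_subset_closedBall (dist_nonneg.trans (hR hz)) (hy.trans hR)⟩ ⟨x, h⟩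

end Radii

section AdmissibleSets

variable {d} {Ps : Set (Set (Set (Pt d)))} {P Q : Set (Set (Pt d))} {B C : Set (Pt d)}
  {x y : Pt d} {R T ρ : ℝ}

lemma Admissible.mem_of_subset (hadm : Admissible d Ps) (hQ : Q ∈ Ps) (hPQ : P ⊆ Q)
    (hP : P.Nonempty) : P ∈ Ps :=
  hadm.subClosed Q hQ P ((hadm.pattern Q hQ).of_subset hPQ hP) hPQ

lemma Admissible.neZero (hadm : Admissible d Ps) (hP : P ∈ Ps) : NeZero d := by
  refine ⟨?_⟩
  rintro rfl
  obtain ⟨rmin, rmax, hrmin, -, hbounds⟩ := hadm.tileBounds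
  obtain ⟨m, hm⟩ := (hadm.pattern P hP).nonempty
  obtain ⟨x, hx⟩ := ((hadm.pattern P hP).isTile hm).nonempty
  -- In dimension zero every closed ball is contained in the one-point tile, so `sSup` is junk.
  have hrIn : rIn 0 {m} = 0 := by
    refine Real.sSup_of_not_bddAbove fun ⟨b, hb⟩ => (lt_add_one b).not_ge (hb ⟨x, fun y _ => ?_⟩)
    exact ⟨m, rfl, Subsingleton.elim y x ▸ hx⟩
  have := (hbounds m (hadm.mem_of_subset hP (singleton_subset_iff.2 hm) (singleton_nonempty m))).1
  linarith

lemma Admissible.exists_forall_dist_le (hadm : Admissible d Ps) :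
    ∃ T > 0, ∀ P ∈ Ps, ∀ m ∈ P, ∀ x ∈ m, ∀ y ∈ m, dist x y ≤ T := by
  obtain ⟨rmin, rmax, hrmin, hle, hbounds⟩ := hadm.tileBounds
  refine ⟨2 * rmax, by linarith, fun P hP m hm x hx y hy => ?_⟩
  have hm' := hadm.mem_of_subset hP (singleton_subset_iff.2 hm) (singleton_nonempty m)
  calc dist x y ≤ 2 * rOut d {m} :=
        dist_le_two_mul_rOut (hadm.pattern _ hm') ⟨m, rfl, hx⟩ ⟨m, rfl, hy⟩
    _ ≤ 2 * rmax := by gcongr; exact (hbounds m hm').2.2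

lemma Admissible.exists_extend (hadm : Admissible d Ps) (hP : P ∈ Ps) (hx : x ∈ supp d P)
    (hR : 0 < R) : ∃ Q ∈ Ps, P ⊆ Q ∧ closedBall x R ⊆ supp d Q := by
  obtain ⟨Q, hQ, hPQ, hball⟩ := hadm.extend _ (hadm.transClosed (-x) P hP)
    (by rw [supp_patTrans]; exact ⟨x, hx, add_neg_cancel x⟩) R hR
  refine ⟨patTrans d x Q, hadm.transClosed x Q hQ, ?_, ?_⟩
  · exact (patTrans_neg_patTrans x P).symm.trans_subset (image_mono hPQ)
  · rw [supp_patTrans]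
    refine Subset.trans ?_ (image_mono hball)
    simp

lemma Admissible.exists_patch_around_ball (hadm : Admissible d Ps)
    (hT : ∀ P ∈ Ps, ∀ m ∈ P, ∀ x ∈ m, ∀ y ∈ m, dist x y ≤ T) (hP : P ∈ Ps) (hx : x ∈ supp d P)
    (hR : 0 < R) (hB : B ⊆ closedBall x R) (hBP : B ⊆ supp d P) :
    ∃ P' ∈ Ps, closedBall x R ⊆ supp d P' ∧ supp d P' ⊆ closedBall x (R + T) ∧
      patRestrict d P' B = patRestrict d P B := by
  obtain ⟨P₁, hP₁, hPP₁, hball⟩ := hadm.exists_extend hP hx hR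
  let P' : Set (Set (Pt d)) := {m ∈ P₁ | (m ∩ closedBall x R).Nonempty}
  have hP'₁ : P' ⊆ P₁ := sep_subset _ _
  have hballP' : closedBall x R ⊆ supp d P' := fun y hy => by
    obtain ⟨m, hm, hym⟩ := hball hy
    exact ⟨m, ⟨hm, y, hym, hy⟩, hym⟩
  obtain ⟨m₀, hm₀, -⟩ := hballP' (mem_closedBall_self hR.le)
  refine ⟨P', hadm.mem_of_subset hP₁ hP'₁ ⟨m₀, hm₀⟩, hballP', ?_, ?_⟩
  · rintro y ⟨m, ⟨hm, z, hzm, hz⟩, hym⟩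
    calc dist y x ≤ dist z x + dist y z := (dist_triangle y z x).trans_eq (add_comm _ _)
      _ ≤ R + T := add_le_add hz (hT P₁ hP₁ m hm y hym z hzm)
  · rw [patRestrict_eq_of_subset (hadm.pattern P₁ hP₁) hP'₁ (hB.trans hballP'),
      patRestrict_eq_of_subset (hadm.pattern P₁ hP₁) hPP₁ hBP]

lemma Admissible.exists_patch_inside (hadm : Admissible d Ps)
    (hT : ∀ P ∈ Ps, ∀ m ∈ P, ∀ x ∈ m, ∀ y ∈ m, dist x y ≤ T) (hT₀ : 0 ≤ T) (hQ : Q ∈ Ps)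
    (hρ : 0 ≤ ρ) (hyC : closedBall y (ρ + T) ⊆ C) (hCQ : C ⊆ supp d Q) :
    ∃ Q' ∈ Ps, Q' ⊆ Q ∧ supp d Q' ⊆ C ∧ closedBall y ρ ⊆ supp d Q' := by
  have hball : closedBall y ρ ⊆ supp d {q ∈ Q | q ⊆ C} := fun z hz => by
    obtain ⟨q, hq, hzq⟩ := hCQ (hyC (closedBall_subset_closedBall (by linarith) hz))
    refine ⟨q, ⟨hq, fun w hw => hyC ?_⟩, hzq⟩
    calc dist w y ≤ dist z y + dist w z := (dist_triangle w z y).trans_eq (add_comm _ _)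
      _ ≤ ρ + T := add_le_add hz (hT Q hQ q hq w hw z hzq)
  obtain ⟨q₀, hq₀, -⟩ := hball (mem_closedBall_self hρ)
  exact ⟨_, hadm.mem_of_subset hQ (sep_subset _ _) ⟨q₀, hq₀⟩, sep_subset _ _,
    sUnion_subset fun q hq => hq.2, hball⟩

end AdmissibleSets

section BoxSubpatterns

variable {d} {P P' Q : Set (Set (Pt d))} {B C : Set (Pt d)} {t : Pt d}

lemma boxSubpattern_patRestrict_of_patTrans_subset (hQ : IsPattern d Q) (hB : IsBox d B)
    (hC : IsBox d C) (hBP : B ⊆ supp d P) (hCQ : C ⊆ supp d Q) (hPQ : patTrans d t P ⊆ Q)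
    (hPC : supp d (patTrans d t P) ⊆ C) :
    BoxSubpattern d (patRestrict d P B) (patRestrict d Q C) := by
  have hBt : (fun x => x + t) '' B ⊆ supp d (patTrans d t P) := by
    rw [supp_patTrans]
    exact image_mono hBP
  have hBC := hBt.trans hPC
  refine ⟨t, (fun x => x + t) '' B, hB.image_add_right t, ?_, ?_⟩
  · rwa [supp_patRestrict hQ hC hCQ]
  · rw [patRestrict_patRestrict Q hBC, patTrans_patRestrict, patRestrict_eq_of_subset hQ hPQ hBt]

lemma subpatternClass_of_boxSubpattern_patRestrict (hP : IsPattern d P) (hQ : IsPattern d Q)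
    (hB : IsBox d B) (hC : IsBox d C) (hBP : B ⊆ supp d P) (hCQ : C ⊆ supp d Q)
    (hbox : BoxSubpattern d (patRestrict d P B) (patRestrict d Q C)) (hP'P : P' ⊆ P)
    (hP'B : supp d P' ⊆ interior B) : SubpatternClass d P' Q := by
  obtain ⟨t, D, hD, hDC, heq⟩ := hbox
  rw [supp_patRestrict hQ hC hCQ] at hDC
  rw [patRestrict_patRestrict Q hDC] at heq
  have hBD : (fun x => x + t) '' B = D := by
    have hsupp := congrArg (supp d) heq
    rwa [supp_patTrans, supp_patRestrict hP hB hBP, supp_patRestrict hQ hD (hDC.trans hCQ)]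
      at hsupp
  refine ⟨t, ?_⟩
  rintro _ ⟨p, hp, rfl⟩
  have hpB : p ⊆ interior B := (subset_sUnion_of_mem hp).trans hP'B
  have hpP : p ∈ patRestrict d P B := by
    refine ⟨p, hP'P hp, ?_, (inter_eq_left.2 (hpB.trans interior_subset)).symm⟩
    rw [inter_eq_left.2 hpB]
    exact (hP.isTile (hP'P hp)).nonempty
  refine mem_of_mem_patRestrict_of_subset_interior (fun q hq => (hQ.isTile hq).isPreconnected)
    hD.closure_interior.le (heq ▸ mem_image_of_mem _ hpP) ?_
  rw [← hBD, ← (show _ = interior ((fun x => x + t) '' B) from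
    (Homeomorph.addRight t).image_interior B)]
  exact image_mono hpB

end BoxSubpatterns

section Equivalence

variable {d} {Ps : Set (Set (Set (Pt d)))}

/-- Linear repetitivity of the box-patterns derived from `Ps`: at every scale `r ≥ 1`, each
pattern on a `(c * r)`-box contains a translate of each pattern on an `r`-box. -/
def BoxLinearlyRepetitive (d : ℕ) (Ps : Set (Set (Set (Pt d)))) : Prop :=
  ∃ c : ℝ, 0 < c ∧ ∀ r : ℝ, 1 ≤ r → ∀ P ∈ RPatterns d Ps r,
    ∀ Q ∈ RPatterns d Ps (c * r), BoxSubpattern d P Q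

theorem Admissible.boxLinearlyRepetitive (hadm : Admissible d Ps)
    (h : LinearlyRepetitive d Ps) : BoxLinearlyRepetitive d Ps := by
  obtain ⟨c, hc, hrep⟩ := h
  obtain ⟨T, hT₀, hT⟩ := hadm.exists_forall_dist_le
  refine ⟨2 * (c * (d + T) + T), by positivity, ?_⟩
  rintro r hr _ ⟨P, hP, B, hB, hBP, rfl⟩ _ ⟨Q, hQ, C, hC, hCQ, rfl⟩
  have := hadm.neZero hP
  have hd : (1 : ℝ) ≤ d := mod_cast NeZero.one_le
  have hR : 1 ≤ d * r := one_le_mul_of_one_le_of_one_le hd hr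
  obtain ⟨x, hBx, hxB⟩ := hB.exists_center
  obtain ⟨y, -, hyC⟩ := hC.exists_center
  obtain ⟨P', hP', hP'ball, hP'sub, hP'B⟩ := hadm.exists_patch_around_ball hT hP
    (hBP (hxB (mem_closedBall_self (by positivity)))) (by positivity) hBx hBP
  have hradius : c * (d * r + T) + T ≤ 2 * (c * (d + T) + T) * r / 2 := by
    have : 0 ≤ (c * T + T) * (r - 1) := mul_nonneg (by positivity) (by linarith)
    linarith
  obtain ⟨Q', hQ', hQ'Q, hQ'C, hQ'ball⟩ := hadm.exists_patch_inside hT hT₀.le hQ (by positivity)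
    ((closedBall_subset_closedBall hradius).trans hyC) hCQ
  have hP'out : 1 ≤ rOut d P' := hR.trans (le_rOut (hadm.pattern P' hP') hP'ball)
  have hlarge : c * rOut d P' ≤ rIn d Q' :=
    calc c * rOut d P' ≤ c * (d * r + T) := by
          gcongr
          exact rOut_le (hadm.pattern P' hP') hP'sub
      _ ≤ rIn d Q' := le_rIn (hadm.pattern Q' hQ') hQ'ball
  obtain ⟨t, ht⟩ := hrep P' hP' hP'out Q' hQ' hlarge
  rw [← hP'B]
  exact boxSubpattern_patRestrict_of_patTrans_subset (hadm.pattern Q hQ) hB.isBox hC.isBox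
    (hBx.trans hP'ball) hCQ (ht.trans hQ'Q) ((sUnion_subset_sUnion ht).trans hQ'C)

theorem Admissible.linearlyRepetitive (hadm : Admissible d Ps)
    (h : BoxLinearlyRepetitive d Ps) : LinearlyRepetitive d Ps := by
  obtain ⟨c, hc, hrep⟩ := h
  refine ⟨d * (c * 3) + 1, by positivity, fun P hP hPout Q hQ hPQ => ?_⟩
  have hs : 0 < 3 * rOut d P := by linarith
  obtain ⟨x, hx⟩ := (hadm.pattern P hP).supp_nonempty
  obtain ⟨B, hB, hBx, hxB⟩ := exists_isRBox_between_balls x hs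
  have hPB : supp d P ⊆ interior B := fun z hz => hxB <| by
    rw [mem_ball]
    linarith [dist_le_two_mul_rOut (hadm.pattern P hP) hz hx]
  have := hadm.neZero hP
  have hd : (0 : ℝ) < d := mod_cast NeZero.pos d
  obtain ⟨P₁, hP₁, hPP₁, hball⟩ := hadm.exists_extend hP hx (mul_pos hd hs)
  obtain ⟨y, hy⟩ := exists_closedBall_of_lt_rIn (P := Q) (s := d * (c * (3 * rOut d P)))
    (by linarith)
  obtain ⟨C, hC, hCy, -⟩ := exists_isRBox_between_balls y (mul_pos hc hs)
  rw [mul_left_comm] at hC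
  exact subpatternClass_of_boxSubpattern_patRestrict (hadm.pattern P₁ hP₁) (hadm.pattern Q hQ)
    hB.isBox hC.isBox (hBx.trans hball) (hCy.trans hy)
    (hrep _ (by linarith) _ ⟨P₁, hP₁, B, hB, hBx.trans hball, rfl⟩ _
      ⟨Q, hQ, C, hC, hCy.trans hy, rfl⟩) hPP₁ hPB

end Equivalence

/-- Proposition 3.4. Equivalence between linear repetitivity and its
box-pattern version. -/
theorem linearlyRepetitive_iff_box (d : ℕ) (Ps : Set (Set (Set (Pt d))))
    (hadm : Admissible d Ps) :
    LinearlyRepetitive d Ps ↔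
      ∃ c : ℝ, 0 < c ∧ ∀ r : ℝ, 1 ≤ r → ∀ P ∈ RPatterns d Ps r,
        ∀ Q ∈ RPatterns d Ps (c * r), BoxSubpattern d P Q :=
  ⟨hadm.boxLinearlyRepetitive, hadm.linearlyRepetitive⟩

end
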